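/- Assume conditions (A), (S), (S)₂ and (K). Then there exist constants C > 0 and c > 0 such that for every r ≥ 0, every ω ∈ S^{n−1}, and every differentiable function û : [0,∞) → ℂᵐ satisfying A⁰û′(t) + i r A(ω) û(t) + L û(t) = 0 for all t ≥ 0, one has |û(t)| ≤ C e^{−c ρ(r) t} |û(0)| for all t ≥ 0. -/

import Mathlib

open Matrix BigOperators Finset

noncomputable section

/-- Complexification of a real matrix. -/
def cmap {a b : ℕ} (X : Matrix (Fin a) (Fin b) ℝ) : Matrix (Fin a) (Fin b) ℂ :=
  X.map (fun x => (x : ℂ))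

/-- Real part of the standard Hermitian inner product `⟨x, y⟩ = ∑ xᵢ conj yᵢ` on `ℂᵐ`. -/
def reIP {m : ℕ} (x y : Fin m → ℂ) : ℝ := (∑ i, x i * (starRingEnd ℂ) (y i)).re

/-- Symmetric part `X₁ = (X + Xᵀ)/2` of a real square matrix. -/
def symP {m : ℕ} (X : Matrix (Fin m) (Fin m) ℝ) : Matrix (Fin m) (Fin m) ℝ :=
  (2⁻¹ : ℝ) • (X + Xᵀ)

/-- Skew-symmetric part `X₂ = (X − Xᵀ)/2` of a real square matrix. -/
def skewP {m : ℕ} (X : Matrix (Fin m) (Fin m) ℝ) : Matrix (Fin m) (Fin m) ℝ :=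
  (2⁻¹ : ℝ) • (X - Xᵀ)

/-- Kernel of (the complexification of) a real matrix, as a subset of `ℂᵐ`. -/
def kerC {m : ℕ} (L : Matrix (Fin m) (Fin m) ℝ) : Set (Fin m → ℂ) :=
  {z | (cmap L).mulVec z = 0}

/-- Euclidean norm on `ℂᵐ`. -/
def cnrm {m : ℕ} (z : Fin m → ℂ) : ℝ := Real.sqrt (∑ i, Complex.normSq (z i))

lemma reIP_eq {m : ℕ} (x y : Fin m → ℂ) : reIP x y = (x ⬝ᵥ star y).re := by
  simp [reIP, dotProduct]

lemma reIP_add_left {m : ℕ} (x y z : Fin m → ℂ) : reIP (x + y) z = reIP x z + reIP y z := by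
  simp [reIP_eq, add_dotProduct]

lemma reIP_smul_left {m : ℕ} (a : ℝ) (x z : Fin m → ℂ) :
    reIP ((a : ℂ) • x) z = a * reIP x z := by
  simp [reIP_eq, smul_dotProduct]

lemma reIP_comm {m : ℕ} (x y : Fin m → ℂ) : reIP x y = reIP y x := by
  simp only [reIP, Complex.re_sum]
  refine Finset.sum_congr rfl fun i _ => ?_
  simp; ring

lemma reIP_neg_left {m : ℕ} (x z : Fin m → ℂ) : reIP (-x) z = - reIP x z := by
  simp [reIP_eq, neg_dotProduct]

lemma reIP_smul_right {m : ℕ} (a : ℝ) (x z : Fin m → ℂ) :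
    reIP x ((a : ℂ) • z) = a * reIP x z := by
  rw [reIP_comm, reIP_smul_left, reIP_comm]

lemma reIP_add_right {m : ℕ} (x y z : Fin m → ℂ) : reIP z (x + y) = reIP z x + reIP z y := by
  rw [reIP_comm, reIP_add_left, reIP_comm x, reIP_comm y]

lemma reIP_adj {m : ℕ} (M : Matrix (Fin m) (Fin m) ℂ) (x y : Fin m → ℂ) :
    reIP (M *ᵥ x) y = reIP x (Mᴴ *ᵥ y) := by
  rw [reIP_eq, reIP_eq, star_mulVec, conjTranspose_conjTranspose, dotProduct_comm,
    dotProduct_mulVec, dotProduct_comm]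

lemma reIP_self {m : ℕ} (x : Fin m → ℂ) : reIP x x = ∑ i, Complex.normSq (x i) := by
  simp only [reIP, Complex.re_sum]
  refine Finset.sum_congr rfl fun i _ => ?_
  simp [Complex.normSq_apply]

lemma reIP_self_nonneg {m : ℕ} (x : Fin m → ℂ) : 0 ≤ reIP x x := by
  rw [reIP_self]; exact Finset.sum_nonneg fun i _ => Complex.normSq_nonneg _

lemma reIP_self_eq_zero {m : ℕ} {x : Fin m → ℂ} (h : reIP x x = 0) : x = 0 := by
  rw [reIP_self, Finset.sum_eq_zero_iff_of_nonneg (fun i _ => Complex.normSq_nonneg _)] at h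
  funext i
  exact Complex.normSq_eq_zero.1 (h i (Finset.mem_univ _))

lemma reIP_herm {m : ℕ} (M : Matrix (Fin m) (Fin m) ℂ) (z : Fin m → ℂ) :
    reIP (Mᴴ *ᵥ z) z = reIP (M *ᵥ z) z := by
  rw [reIP_adj M, reIP_comm]

lemma reIP_symP {m : ℕ} (X : Matrix (Fin m) (Fin m) ℝ) (z : Fin m → ℂ) :
    reIP (cmap (symP X) *ᵥ z) z = reIP (cmap X *ᵥ z) z := by
  have h : cmap (symP X) = ((2⁻¹ : ℝ) : ℂ) • (cmap X + (cmap X)ᴴ) := by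
    ext i j; simp [cmap, symP]; ring
  rw [h, smul_mulVec, reIP_smul_left, add_mulVec, reIP_add_left, reIP_herm]
  ring

lemma reIP_skewP {m : ℕ} (X : Matrix (Fin m) (Fin m) ℝ) (z : Fin m → ℂ) :
    reIP ((Complex.I • cmap (skewP X)) *ᵥ z) z = reIP ((Complex.I • cmap X) *ᵥ z) z := by
  have h : Complex.I • cmap (skewP X) =
      ((2⁻¹ : ℝ) : ℂ) • (Complex.I • cmap X + (Complex.I • cmap X)ᴴ) := by
    ext i j; simp [cmap, skewP]; ring
  rw [h, smul_mulVec, reIP_smul_left, add_mulVec, reIP_add_left, reIP_herm]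
  ring

lemma cmap_mul {m : ℕ} (X Y : Matrix (Fin m) (Fin m) ℝ) : cmap (X * Y) = cmap X * cmap Y := by
  ext i j; simp [cmap, Matrix.mul_apply]

lemma cmap_adj {m : ℕ} (X : Matrix (Fin m) (Fin m) ℝ) : (cmap X)ᴴ = cmap Xᵀ := by
  ext i j; simp [cmap]

lemma cmap_neg {m : ℕ} (X : Matrix (Fin m) (Fin m) ℝ) : cmap (-X) = - cmap X := by
  ext i j; simp [cmap]

lemma continuous_reIP {m : ℕ} {T : Type*} [TopologicalSpace T] {f g : T → Fin m → ℂ}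
    (hf : Continuous f) (hg : Continuous g) : Continuous fun t => reIP (f t) (g t) := by
  unfold reIP
  fun_prop

lemma finsler {m n : ℕ} (f : (Fin n → ℝ) → (Fin m → ℂ) → ℝ) (g : (Fin m → ℂ) → ℝ)
    (hf : Continuous fun p : (Fin n → ℝ) × (Fin m → ℂ) => f p.1 p.2) (hg : Continuous g)
    (hfh : ∀ ω (a : ℝ) z, f ω ((a : ℂ) • z) = a ^ 2 * f ω z)
    (hgh : ∀ (a : ℝ) z, g ((a : ℂ) • z) = a ^ 2 * g z)
    (hg0 : ∀ z, 0 ≤ g z)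
    (hpos : ∀ ω : Fin n → ℝ, (∑ j, ω j ^ 2 = 1) → ∀ z, z ≠ 0 → g z = 0 → 0 < f ω z) :
    ∃ M ≥ (0:ℝ), ∃ δ > (0:ℝ), ∀ ω : Fin n → ℝ, (∑ j, ω j ^ 2 = 1) → ∀ z,
      δ * reIP z z ≤ f ω z + M * g z := by
  have hΩ : IsCompact {ω : Fin n → ℝ | ∑ j, ω j ^ 2 = 1} := by
    refine Metric.isCompact_of_isClosed_isBounded
      (isClosed_eq (by fun_prop) continuous_const) ?_
    refine (Metric.isBounded_closedBall (x := (0 : Fin n → ℝ)) (r := 1)).subset ?_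
    intro ω hω
    simp only [Set.mem_ofPred_eq] at hω
    rw [mem_closedBall_zero_iff, pi_norm_le_iff_of_nonneg zero_le_one]
    intro i
    have := Finset.single_le_sum (f := fun j => ω j ^ 2) (fun j _ => sq_nonneg _)
      (Finset.mem_univ i)
    simp only [hω] at this
    rw [Real.norm_eq_abs]
    exact (sq_le_one_iff_abs_le_one _).1 this
  have hZ : IsCompact {z : Fin m → ℂ | reIP z z = 1} := by
    refine Metric.isCompact_of_isClosed_isBounded
      (isClosed_eq (continuous_reIP continuous_id continuous_id) continuous_const) ?_
    refine (Metric.isBounded_closedBall (x := (0 : Fin m → ℂ)) (r := 1)).subset ?_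
    intro z hz
    simp only [Set.mem_ofPred_eq, reIP_self] at hz
    rw [mem_closedBall_zero_iff, pi_norm_le_iff_of_nonneg zero_le_one]
    intro i
    have := Finset.single_le_sum (f := fun j => Complex.normSq (z j))
      (fun j _ => Complex.normSq_nonneg _) (Finset.mem_univ i)
    simp only [hz] at this
    rw [Complex.normSq_eq_norm_sq] at this
    exact (sq_le_one_iff₀ (norm_nonneg _)).1 this
  obtain ⟨k, hk⟩ := (hΩ.prod hZ).elim_directed_cover
    (fun k : ℕ => {p : (Fin n → ℝ) × (Fin m → ℂ) | 1 / ((k : ℝ) + 1) < f p.1 p.2 + k * g p.2})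
    (fun k => isOpen_lt continuous_const
      (hf.add (continuous_const.mul (hg.comp continuous_snd))))
    (by
      rintro ⟨ω, z⟩ ⟨hω, hz⟩
      simp only [Set.mem_ofPred_eq, Set.mem_iUnion] at hω hz ⊢
      have hz0 : z ≠ 0 := by
        rintro rfl
        simp [reIP] at hz
      rcases (hg0 z).eq_or_lt with h0 | h0
      · obtain ⟨k, hk⟩ := exists_nat_one_div_lt (hpos ω hω z hz0 h0.symm)
        exact ⟨k, by rw [← h0]; simpa using hk⟩
      · obtain ⟨k, hk⟩ := exists_nat_gt ((1 - f ω z) / g z)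
        refine ⟨k, ?_⟩
        rw [div_lt_iff₀ h0] at hk
        have : 1 / ((k : ℝ) + 1) ≤ 1 := by
          rw [div_le_one (by positivity)]; linarith [Nat.cast_nonneg (α := ℝ) k]
        linarith)
    (by
      apply Monotone.directed_le
      intro k l hkl p hp
      simp only [Set.mem_ofPred_eq] at hp ⊢
      have h1 : 1 / ((l : ℝ) + 1) ≤ 1 / ((k : ℝ) + 1) := by gcongr
      have h2 : (k : ℝ) * g p.2 ≤ l * g p.2 := by
        have := hg0 p.2
        gcongr
      linarith)
  refine ⟨k, Nat.cast_nonneg k, 1 / ((k : ℝ) + 1), by positivity, ?_⟩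
  intro ω hω z
  rcases (reIP_self_nonneg z).eq_or_lt with h0 | h0
  · have hz := reIP_self_eq_zero h0.symm
    have h1 := hfh ω 0 0
    have h2 := hgh 0 0
    simp at h1 h2
    rw [← h0, hz, h1, h2]; simp
  · set a := Real.sqrt (reIP z z) with ha
    have ha0 : 0 < a := Real.sqrt_pos.2 h0
    have haa : a ^ 2 = reIP z z := Real.sq_sqrt h0.le
    have hz : ((a⁻¹ : ℝ) : ℂ) • z ∈ {z : Fin m → ℂ | reIP z z = 1} := by
      simp only [Set.mem_ofPred_eq, reIP_smul_left, reIP_smul_right, ← haa]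
      field_simp
    have := hk (Set.mk_mem_prod (a := ω) hω hz)
    simp only [Set.mem_ofPred_eq, hfh, hgh] at this
    rw [← haa]
    have h3 := mul_le_mul_of_nonneg_left this.le (sq_nonneg a)
    have h4 : a ^ 2 * (a⁻¹ ^ 2 * f ω z + k * (a⁻¹ ^ 2 * g z)) = f ω z + k * g z := by
      field_simp
    linarith

lemma upper {m n : ℕ} (f : (Fin n → ℝ) → (Fin m → ℂ) → ℝ)
    (hf : Continuous fun p : (Fin n → ℝ) × (Fin m → ℂ) => f p.1 p.2)
    (hfh : ∀ ω (a : ℝ) z, f ω ((a : ℂ) • z) = a ^ 2 * f ω z) :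
    ∃ M > (0:ℝ), ∀ ω : Fin n → ℝ, (∑ j, ω j ^ 2 = 1) → ∀ z,
      f ω z ≤ M * reIP z z := by
  obtain ⟨M, hM, δ, hδ, h⟩ := finsler (fun ω z => - f ω z) (fun z => reIP z z) hf.neg
    (continuous_reIP continuous_id continuous_id) (by intro ω a z; rw [hfh]; ring)
    (by intro a z; rw [reIP_smul_left, reIP_smul_right]; ring) reIP_self_nonneg
    (fun ω _ z hz h => absurd (reIP_self_eq_zero h) hz)
  refine ⟨M + 1, by linarith, fun ω hω z => ?_⟩
  have := h ω hω z
  have := mul_nonneg hδ.le (reIP_self_nonneg z)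
  linarith [reIP_self_nonneg z]

lemma quad_hom {m : ℕ} (M : Matrix (Fin m) (Fin m) ℂ) (a : ℝ) (z : Fin m → ℂ) :
    reIP (M *ᵥ ((a : ℂ) • z)) ((a : ℂ) • z) = a ^ 2 * reIP (M *ᵥ z) z := by
  rw [mulVec_smul, reIP_smul_left, reIP_smul_right]; ring

lemma quad_hom' {m : ℕ} (M : Matrix (Fin m) (Fin m) ℂ) (a : ℝ) (z : Fin m → ℂ) :
    reIP (M *ᵥ ((a : ℂ) • z)) (M *ᵥ ((a : ℂ) • z)) = a ^ 2 * reIP (M *ᵥ z) (M *ᵥ z) := by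
  rw [mulVec_smul, reIP_smul_left, reIP_smul_right]; ring

lemma psd_bound {m : ℕ} (B : Matrix (Fin m) (Fin m) ℂ) (hB : Bᴴ = B)
    (hp : ∀ z, 0 ≤ reIP (B *ᵥ z) z) (C : ℝ) (hC : 0 < C)
    (hu : ∀ z, reIP (B *ᵥ z) z ≤ C * reIP z z) (z : Fin m → ℂ) :
    reIP (B *ᵥ z) (B *ᵥ z) ≤ C * reIP (B *ᵥ z) z := by
  have h := hp (z + ((-C⁻¹ : ℝ) : ℂ) • (B *ᵥ z))
  have h2 := hu (B *ᵥ z)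
  have h3 : reIP (B *ᵥ B *ᵥ z) z = reIP (B *ᵥ z) (B *ᵥ z) := by
    rw [reIP_adj B (B *ᵥ z), hB]
  rw [mulVec_add, mulVec_smul] at h
  simp only [reIP_add_left, reIP_add_right, reIP_smul_left, reIP_smul_right, h3] at h
  have h4 : C⁻¹ * (C⁻¹ * reIP (B *ᵥ B *ᵥ z) (B *ᵥ z)) ≤ C⁻¹ * reIP (B *ᵥ z) (B *ᵥ z) := by
    calc _ ≤ C⁻¹ * (C⁻¹ * (C * reIP (B *ᵥ z) (B *ᵥ z))) := by gcongr
      _ = _ := by field_simp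
  have h5 : C⁻¹ * reIP (B *ᵥ z) (B *ᵥ z) ≤ reIP (B *ᵥ z) z := by linarith
  rwa [inv_mul_le_iff₀ hC] at h5

lemma factor {m : ℕ} (B L : Matrix (Fin m) (Fin m) ℂ)
    (h : ∀ z, B *ᵥ z = 0 → L *ᵥ z = 0) : ∃ D : Matrix (Fin m) (Fin m) ℂ, L = D * B := by
  have hk : LinearMap.ker (Matrix.toLin' B) ≤ LinearMap.ker (Matrix.toLin' L) := by
    intro z hz
    simp only [LinearMap.mem_ker, Matrix.toLin'_apply] at hz ⊢
    exact h z hz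
  obtain ⟨d, hd⟩ := LinearMap.exists_extend
    (((LinearMap.ker (Matrix.toLin' B)).liftQ (Matrix.toLin' L) hk) ∘ₗ
      (Matrix.toLin' B).quotKerEquivRange.symm.toLinearMap)
  refine ⟨LinearMap.toMatrix' d, ?_⟩
  apply Matrix.toLin'.injective
  rw [Matrix.toLin'_mul, Matrix.toLin'_toMatrix']
  ext1 z
  refine LinearMap.ext_ring ?_
  have := LinearMap.congr_fun hd ⟨Matrix.toLin' B (Pi.single z 1), LinearMap.mem_range_self _ _⟩
  have h2 : (Matrix.toLin' B).quotKerEquivRange.symm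
      ⟨Matrix.toLin' B (Pi.single z 1), LinearMap.mem_range_self _ _⟩ =
      Submodule.Quotient.mk (Pi.single z 1) := by
    rw [LinearEquiv.symm_apply_eq]
    rfl
  simp only [LinearMap.comp_apply, LinearEquiv.coe_coe, h2] at this
  simp only [LinearMap.comp_apply, LinearMap.single_apply]
  exact this.symm

lemma hasDeriv_reIP {m : ℕ} (M : Matrix (Fin m) (Fin m) ℂ) (hM : Mᴴ = M)
    (u : ℝ → Fin m → ℂ) (u' : Fin m → ℂ) (s : Set ℝ) (t : ℝ) (h : HasDerivWithinAt u u' s t) :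
    HasDerivWithinAt (fun t => reIP (M *ᵥ u t) (u t)) (2 * reIP (M *ᵥ u') (u t)) s t := by
  have hM1 : HasDerivWithinAt (fun t => M *ᵥ u t) (M *ᵥ u') s t :=
    ((LinearMap.toContinuousLinearMap
      ((Matrix.mulVecLin M).restrictScalars ℝ)).hasFDerivAt).comp_hasDerivWithinAt t h
  have h1 := fun i => (hasDerivWithinAt_pi.1 hM1 i)
  have h2 := fun i => (hasDerivWithinAt_pi.1 h i)
  have h3 : HasDerivWithinAt (fun t => ∑ i, (M *ᵥ u t) i * star (u t i))
      (∑ i, ((M *ᵥ u') i * star (u t i) + (M *ᵥ u t) i * star (u' i))) s t :=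
    HasDerivWithinAt.fun_sum fun i _ => (h1 i).mul (h2 i).star
  have h4 := (Complex.reCLM.hasFDerivAt).comp_hasDerivWithinAt t h3
  have h5 : Complex.reCLM (∑ i, ((M *ᵥ u') i * star (u t i) + (M *ᵥ u t) i * star (u' i)))
      = 2 * reIP (M *ᵥ u') (u t) := by
    rw [Finset.sum_add_distrib, map_add]
    have : reIP (M *ᵥ u') (u t) = reIP (M *ᵥ u t) u' := by
      rw [reIP_adj, hM, reIP_comm]
    rw [two_mul]
    nth_rewrite 2 [this]
    rfl
  rw [h5] at h4
  exact h4

lemma gronwall (E E' : ℝ → ℝ) (lam : ℝ)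
    (hE : ∀ t, 0 ≤ t → HasDerivWithinAt E (E' t) (Set.Ici 0) t)
    (h : ∀ t, 0 ≤ t → E' t ≤ - lam * E t) (t : ℝ) (ht : 0 ≤ t) :
    E t ≤ Real.exp (-(lam * t)) * E 0 := by
  have hd : ∀ t, 0 ≤ t → HasDerivWithinAt (fun t => Real.exp (lam * t) * E t)
      (Real.exp (lam * t) * (lam * 1) * E t + Real.exp (lam * t) * E' t) (Set.Ici 0) t :=
    fun t ht => ((((hasDerivAt_id t).const_mul lam).exp).hasDerivWithinAt).mul (hE t ht)
  have ha : AntitoneOn (fun t => Real.exp (lam * t) * E t) (Set.Ici 0) := by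
    refine antitoneOn_of_hasDerivWithinAt_nonpos (convex_Ici 0)
      (fun t ht => (hd t ht).continuousWithinAt)
      (fun t ht => (hd t (interior_subset ht)).mono interior_subset) ?_
    intro t ht
    have := h t (interior_subset ht)
    have h2 := mul_le_mul_of_nonneg_left this (Real.exp_pos (lam * t)).le
    linarith
  have := ha (Set.mem_Ici.2 le_rfl) (Set.mem_Ici.2 ht) ht
  simp only [mul_zero, Real.exp_zero, one_mul] at this
  rw [Real.exp_neg, ← div_eq_inv_mul, le_div_iff₀ (Real.exp_pos _)]
  linarith

lemma deriv_ident {m : ℕ} (A0 A L T : Matrix (Fin m) (Fin m) ℂ) (u v : Fin m → ℂ) (r : ℝ)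
    (heq : A0 *ᵥ v + ((r : ℂ) * Complex.I) • (A *ᵥ u) + L *ᵥ u = 0) :
    reIP ((T * A0) *ᵥ v) u =
      -(r * reIP ((Complex.I • (T * A)) *ᵥ u) u + reIP ((T * L) *ᵥ u) u) := by
  have h1 : A0 *ᵥ v = -(((r : ℂ) * Complex.I) • (A *ᵥ u) + L *ᵥ u) := by
    rw [add_assoc] at heq
    exact eq_neg_of_add_eq_zero_left heq
  rw [← mulVec_mulVec, h1, mulVec_neg, reIP_neg_left, mulVec_add, reIP_add_left, mulVec_smul,
    mul_smul, reIP_smul_left, smul_mulVec, mulVec_mulVec, mulVec_mulVec]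

lemma cont_quad {m n : ℕ} (M : (Fin n → ℝ) → Matrix (Fin m) (Fin m) ℂ) (hM : Continuous M) :
    Continuous fun p : (Fin n → ℝ) × (Fin m → ℂ) => reIP (M p.1 *ᵥ p.2) p.2 :=
  continuous_reIP ((hM.comp continuous_fst).matrix_mulVec continuous_snd) continuous_snd

lemma cont_quad' {m : ℕ} (M : Matrix (Fin m) (Fin m) ℂ) :
    Continuous fun z : Fin m → ℂ => reIP (M *ᵥ z) z :=
  continuous_reIP (continuous_const.matrix_mulVec continuous_id) continuous_id

lemma cont_cmap {m n : ℕ} (M : (Fin n → ℝ) → Matrix (Fin m) (Fin m) ℝ) (hM : Continuous M) :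
    Continuous fun ω => cmap (M ω) := by
  unfold cmap
  exact hM.matrix_map Complex.continuous_ofReal

lemma young {m : ℕ} (y u : Fin m → ℂ) (a : ℝ) :
    2 * a * reIP y u ≤ reIP y y + a ^ 2 * reIP u u := by
  have h := reIP_self_nonneg (y + ((-a : ℝ) : ℂ) • u)
  simp only [reIP_add_left, reIP_add_right, reIP_smul_left, reIP_smul_right, reIP_comm u y] at h
  linarith

/-- **Theorem 2.2 (decay property of the standard type, pointwise estimate).**
Under conditions (A), (S), (S)₂ and (K), solutions of `A⁰û′ + i r A(ω) û + L û = 0` satisfy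
`|û(t)| ≤ C e^{−c ρ(r) t} |û(0)|` with `ρ(r) = r²/(1+r²)`. -/
theorem decay_standard_nonsymmetric_pointwise
    (m n : ℕ) (hm : 1 ≤ m) (hn : 1 ≤ n)
    (A0 : Matrix (Fin m) (Fin m) ℝ) (A : Fin n → Matrix (Fin m) (Fin m) ℝ)
    (L : Matrix (Fin m) (Fin m) ℝ)
    -- condition (A)
    (hA0sym : A0ᵀ = A0) (hAsym : ∀ j, (A j)ᵀ = A j)
    (hA0pos : ∀ z : Fin m → ℂ, z ≠ 0 → 0 < reIP ((cmap A0).mulVec z) z)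
    (hLnn : ∀ z : Fin m → ℂ, 0 ≤ reIP ((cmap L).mulVec z) z)
    (hLker : ∃ z : Fin m → ℂ, z ≠ 0 ∧ z ∈ kerC L)
    -- condition (S)
    (S : Matrix (Fin m) (Fin m) ℝ)
    (hSA0 : (S * A0)ᵀ = S * A0)
    (hSLnn : ∀ z : Fin m → ℂ, 0 ≤ reIP ((cmap (symP (S * L) + symP L)).mulVec z) z)
    (hSLker : kerC (symP (S * L) + symP L) = kerC L)
    -- condition (S)₂ : `i(SA(ω))₂ ≥ 0` on `ℂᵐ`
    (hS2 : ∀ ω : Fin n → ℝ, (∑ j, ω j ^ 2 = 1) → ∀ z : Fin m → ℂ,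
      0 ≤ reIP ((Complex.I • cmap (skewP (S * (∑ j, ω j • A j)))).mulVec z) z)
    -- condition (K): a smooth compensating matrix family
    (K : (Fin n → ℝ) → Matrix (Fin m) (Fin m) ℝ)
    (hKsmooth : ∀ i j, ContDiff ℝ (⊤ : ℕ∞) (fun ω => K ω i j))
    (hKodd : ∀ ω : Fin n → ℝ, (∑ j, ω j ^ 2 = 1) → K (-ω) = - K ω)
    (hKA0 : ∀ ω : Fin n → ℝ, (∑ j, ω j ^ 2 = 1) → (K ω * A0)ᵀ = -(K ω * A0))
    (hKpos : ∀ ω : Fin n → ℝ, (∑ j, ω j ^ 2 = 1) → ∀ z ∈ kerC L, z ≠ 0 →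
      0 < reIP ((cmap (symP (K ω * (∑ j, ω j • A j)))).mulVec z) z) :
    ∃ C > (0:ℝ), ∃ c > (0:ℝ), ∀ r : ℝ, 0 ≤ r → ∀ ω : Fin n → ℝ, (∑ j, ω j ^ 2 = 1) →
      ∀ u u' : ℝ → (Fin m → ℂ),
      (∀ t : ℝ, 0 ≤ t → HasDerivWithinAt u (u' t) (Set.Ici 0) t) →
      (∀ t : ℝ, 0 ≤ t →
        (cmap A0).mulVec (u' t)
          + ((r : ℂ) * Complex.I) • (cmap (∑ j, ω j • A j)).mulVec (u t)
          + (cmap L).mulVec (u t) = 0) →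
      ∀ t : ℝ, 0 ≤ t →
        cnrm (u t) ≤ C * Real.exp (-(c * (r ^ 2 / (1 + r ^ 2)) * t)) * cnrm (u 0) := by
  set Aw : (Fin n → ℝ) → Matrix (Fin m) (Fin m) ℝ := fun ω => ∑ j, ω j • A j with hAw
  have hAwsym : ∀ ω, (Aw ω)ᵀ = Aw ω := by
    intro ω
    simp only [hAw, Matrix.transpose_sum, Matrix.transpose_smul, hAsym]
  have hKc : Continuous K :=
    continuous_matrix fun i j => (hKsmooth i j).continuous
  have hAwc : Continuous Aw := by
    simp only [hAw]
    fun_prop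
  set B : Matrix (Fin m) (Fin m) ℂ := cmap (symP (S * L) + symP L) with hBdef
  have hBherm : Bᴴ = B := by
    rw [hBdef, cmap_adj]
    congr 1
    ext i j
    simp [symP, -transpose_mul]
    ring
  have hBq : ∀ z, reIP (B *ᵥ z) z
      = reIP (cmap (S * L) *ᵥ z) z + reIP (cmap L *ᵥ z) z := by
    intro z
    have : B = cmap (symP (S * L)) + cmap (symP L) := by
      ext i j; simp [hBdef, cmap]
    rw [this, add_mulVec, reIP_add_left, reIP_symP, reIP_symP]
  -- bounds on B
  obtain ⟨CB, hCB, hBu⟩ := upper (n := n) (fun _ z => reIP (B *ᵥ z) z)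
    (cont_quad (fun _ => B) continuous_const) (fun _ a z => quad_hom B a z)
  obtain ⟨ω₀, hω₀⟩ : ∃ ω : Fin n → ℝ, ∑ j, ω j ^ 2 = 1 := by
    refine ⟨Pi.single ⟨0, hn⟩ 1, ?_⟩
    rw [Finset.sum_eq_single ⟨0, hn⟩]
    · simp
    · intro b _ hb; simp [Pi.single_eq_of_ne hb]
    · simp
  have hBB := psd_bound B hBherm hSLnn CB hCB (hBu ω₀ hω₀)
  have hker : ∀ z, B *ᵥ z = 0 → z ∈ kerC L := by
    intro z hz
    rw [← hSLker]
    exact hz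
  obtain ⟨D, hD⟩ := factor B (cmap L) hker
  -- positivity bounds
  obtain ⟨M0, hM0, δ0, hδ0, hF1⟩ := finsler (n := n) (fun _ z => reIP (cmap (S * A0) *ᵥ z) z)
    (fun z => reIP (cmap A0 *ᵥ z) z) (cont_quad (fun _ => cmap (S * A0)) continuous_const)
    (cont_quad' _) (fun _ a z => quad_hom _ a z) (fun a z => quad_hom _ a z)
    (fun z => by
      by_cases hz : z = 0
      · simp [hz, reIP]
      · exact (hA0pos z hz).le)
    (fun _ _ z hz h => absurd h (hA0pos z hz).ne')
  obtain ⟨M1, hM1, δ1, hδ1, hF2⟩ := finsler (fun ω z => reIP (cmap (symP (K ω * Aw ω)) *ᵥ z) z)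
    (fun z => reIP (B *ᵥ z) z)
    (cont_quad (fun ω => cmap (symP (K ω * Aw ω)))
      (cont_cmap _ (by
        unfold symP
        exact (((hKc.matrix_mul hAwc)).add (hKc.matrix_mul hAwc).matrix_transpose).const_smul (2⁻¹ : ℝ))))
    (cont_quad' _) (fun _ a z => quad_hom _ a z) (fun a z => quad_hom _ a z) hSLnn
    (fun ω hω z hz h => hKpos ω hω z (hker z (by
      have := hBB z
      rw [h, mul_zero] at this
      exact reIP_self_eq_zero (le_antisymm this (reIP_self_nonneg _)))) hz)
  set KA : (Fin n → ℝ) → Matrix (Fin m) (Fin m) ℂ :=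
    fun ω => ((-Complex.I) • cmap (K ω)) * cmap A0 with hKA
  have hcK := cont_cmap K hKc
  have hKAc : Continuous KA :=
    (hcK.const_smul (-Complex.I)).matrix_mul continuous_const
  obtain ⟨CK, hCK, hU1⟩ := upper (fun ω z => |reIP (KA ω *ᵥ z) z|) (cont_quad KA hKAc).abs
    (fun ω a z => by rw [quad_hom, abs_mul, abs_of_nonneg (sq_nonneg a)])
  obtain ⟨C2, hC2, hU2⟩ := upper (n := n)
    (fun _ z => reIP (cmap (S * A0) *ᵥ z) z + (M0 + 1) * reIP (cmap A0 *ᵥ z) z)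
    ((cont_quad (fun _ => cmap (S * A0)) continuous_const).add
      ((cont_quad (fun _ => cmap A0) continuous_const).const_mul _))
    (fun ω a z => by rw [quad_hom, quad_hom]; ring)
  have hIKDc : Continuous fun ω => (Complex.I • cmap (K ω)) * D :=
    (hcK.const_smul Complex.I).matrix_mul continuous_const
  obtain ⟨C3, hC3, hU3⟩ := upper
    (fun ω z => reIP (((Complex.I • cmap (K ω)) * D) *ᵥ z) (((Complex.I • cmap (K ω)) * D) *ᵥ z))
    (continuous_reIP
      ((hIKDc.comp continuous_fst).matrix_mulVec continuous_snd)
      ((hIKDc.comp continuous_fst).matrix_mulVec continuous_snd))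
    (fun ω a z => quad_hom' _ a z)
  -- constants
  set Q : ℝ := M1 + C3 * CB / (2 * δ1) with hQ
  have hQ0 : 0 < Q := by positivity
  obtain ⟨κ, hκ, hκ1, hκ2⟩ : ∃ κ > (0:ℝ), κ * CK ≤ δ0 / 2 ∧ κ * Q ≤ 1 := by
    refine ⟨min (δ0 / 2 / CK) (1 / Q), by positivity, ?_, ?_⟩
    · rw [← le_div_iff₀ hCK]; exact min_le_left _ _
    · rw [← le_div_iff₀ hQ0]; exact min_le_right _ _
  set c2 : ℝ := C2 + δ0 / 2 with hc2
  have hc2p : 0 < c2 := by positivity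
  refine ⟨Real.sqrt (c2 / (δ0 / 2)), by positivity, κ * δ1 / (2 * c2), by positivity, ?_⟩
  intro r hr ω hω u u' hu heq t ht
  set s : ℝ := r / (1 + r ^ 2) with hs
  set ρ : ℝ := r ^ 2 / (1 + r ^ 2) with hρ
  have hρ0 : 0 ≤ ρ := by positivity
  have hs0 : 0 ≤ s := by positivity
  have hrs : s * r = ρ := by rw [hs, hρ]; ring
  have hs1 : s ≤ 1 := by
    rw [hs, div_le_one (by positivity)]; nlinarith [sq_nonneg (r - 1)]
  have hsρ : s ^ 2 ≤ ρ := by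
    have : s ^ 2 = ρ * (1 / (1 + r ^ 2)) := by rw [hs, hρ]; field_simp
    rw [this]
    refine mul_le_of_le_one_right hρ0 ?_
    rw [div_le_one (by positivity)]; nlinarith [sq_nonneg r]
  set H : Matrix (Fin m) (Fin m) ℂ :=
    ((M0 + 1 : ℝ) : ℂ) • cmap A0 + cmap (S * A0) + ((κ * s : ℝ) : ℂ) • KA ω with hH
  have hHherm : Hᴴ = H := by
    have h1 : (KA ω)ᴴ = KA ω := by
      simp only [hKA, smul_mul, ← cmap_mul, conjTranspose_smul, cmap_adj, hKA0 ω hω, cmap_neg]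
      simp
    rw [hH, conjTranspose_add, conjTranspose_add, conjTranspose_smul, conjTranspose_smul, h1,
      cmap_adj, cmap_adj, hA0sym, hSA0]
    simp only [Complex.star_def, Complex.conj_ofReal]
  have hHq : ∀ x y, reIP (H *ᵥ x) y = (M0 + 1) * reIP (cmap A0 *ᵥ x) y
      + reIP (cmap (S * A0) *ᵥ x) y + κ * s * reIP (KA ω *ᵥ x) y := by
    intro x y
    rw [hH, add_mulVec, add_mulVec, smul_mulVec, smul_mulVec, reIP_add_left, reIP_add_left,
      reIP_smul_left, reIP_smul_left]
  have hKAb : ∀ z, |κ * s * reIP (KA ω *ᵥ z) z| ≤ δ0 / 2 * reIP z z := by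
    intro z
    have h1 := hU1 ω hω z
    have hN := reIP_self_nonneg z
    rw [abs_mul, abs_of_nonneg (by positivity : 0 ≤ κ * s)]
    calc κ * s * |reIP (KA ω *ᵥ z) z| ≤ κ * 1 * (CK * reIP z z) := by gcongr
      _ = κ * CK * reIP z z := by ring
      _ ≤ _ := by gcongr
  have hA0nn : ∀ z, 0 ≤ reIP (cmap A0 *ᵥ z) z := by
    intro z
    by_cases hz : z = 0
    · simp [hz, reIP]
    · exact (hA0pos z hz).le
  have hlow : ∀ z, δ0 / 2 * reIP z z ≤ reIP (H *ᵥ z) z := by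
    intro z
    have h1 := hF1 ω hω z
    have h2 := (abs_le.1 (hKAb z)).1
    rw [hHq]
    linarith [hA0nn z]
  have hup : ∀ z, reIP (H *ᵥ z) z ≤ c2 * reIP z z := by
    intro z
    have h1 := hU2 ω hω z
    have h2 := (abs_le.1 (hKAb z)).2
    rw [hHq, hc2]
    linarith
  have hdiss : ∀ t, 0 ≤ t → 2 * reIP (H *ᵥ u' t) (u t) ≤ -(κ * δ1 / c2 * ρ)
      * reIP (H *ᵥ u t) (u t) := by
    intro t ht
    have e := heq t ht
    have i1 := deriv_ident (cmap A0) (cmap (Aw ω)) (cmap L) 1 (u t) (u' t) r e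
    have i2 := deriv_ident (cmap A0) (cmap (Aw ω)) (cmap L) (cmap S) (u t) (u' t) r e
    have i3 := deriv_ident (cmap A0) (cmap (Aw ω)) (cmap L) ((-Complex.I) • cmap (K ω))
      (u t) (u' t) r e
    have j1 : reIP ((Complex.I • cmap (Aw ω)) *ᵥ u t) (u t) = 0 := by
      have := reIP_herm (Complex.I • cmap (Aw ω)) (u t)
      rw [conjTranspose_smul, cmap_adj, hAwsym] at this
      simp only [Complex.star_def, Complex.conj_I, neg_smul, neg_mulVec, reIP_neg_left] at this
      linarith
    have j2 := hS2 ω hω (u t)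
    rw [reIP_skewP, cmap_mul] at j2
    have j3 : Complex.I • (((-Complex.I) • cmap (K ω)) * cmap (Aw ω)) = cmap (K ω * Aw ω) := by
      rw [smul_mul, smul_smul, cmap_mul]; simp
    have j4 : ((-Complex.I) • cmap (K ω)) * cmap L = -(((Complex.I • cmap (K ω)) * D) * B) := by
      rw [hD]; simp [Matrix.mul_assoc]
    rw [one_mul, one_mul, one_mul, j1] at i1
    rw [j3, j4, neg_mulVec, reIP_neg_left] at i3
    rw [← cmap_mul S A0, ← cmap_mul S L] at i2
    have k1 := hF2 ω hω (u t)
    rw [reIP_symP] at k1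
    have k2 := hBq (u t)
    have k3 := young ((((Complex.I • cmap (K ω)) * D) * B) *ᵥ u t) (u t) (δ1 * s)
    have k4 := hU3 ω hω (B *ᵥ u t)
    rw [mulVec_mulVec] at k4
    have k5 := hBB (u t)
    have k6 := hLnn (u t)
    have k7 := hup (u t)
    have k8 := hSLnn (u t)
    rw [hHq, i1, i2]
    have i3' : reIP (KA ω *ᵥ u' t) (u t) = _ := i3
    rw [i3']
    clear i1 i2 i3 i3' j1 j3 j4 e
    generalize reIP ((((Complex.I • cmap (K ω)) * D) * B) *ᵥ u t) (u t) = X at *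
    generalize reIP ((((Complex.I • cmap (K ω)) * D) * B) *ᵥ u t)
      ((((Complex.I • cmap (K ω)) * D) * B) *ᵥ u t) = Y at *
    generalize reIP (B *ᵥ u t) (B *ᵥ u t) = bb at *
    generalize reIP (B *ᵥ u t) (u t) = b at *
    generalize reIP (cmap (K ω * Aw ω) *ᵥ u t) (u t) = ka at *
    generalize reIP (cmap L *ᵥ u t) (u t) = l at *
    generalize reIP (cmap (S * L) *ᵥ u t) (u t) = sl at *
    generalize reIP ((Complex.I • (cmap S * cmap (Aw ω))) *ᵥ u t) (u t) = sa at *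
    generalize reIP (H *ᵥ u t) (u t) = h at *
    have hNu := reIP_self_nonneg (u t)
    generalize reIP (u t) (u t) = N at *
    have p1 : 0 ≤ r * sa := mul_nonneg hr j2
    have p2 : 0 ≤ M0 * l := mul_nonneg hM0 k6
    have p3 : κ * δ1 / c2 * ρ * h ≤ κ * δ1 * ρ * N := by
      calc κ * δ1 / c2 * ρ * h ≤ κ * δ1 / c2 * ρ * (c2 * N) := by gcongr
        _ = _ := by field_simp
    -- the cross term
    have p4 : 2 * (δ1 * s) * X ≤ C3 * (CB * b) + δ1 ^ 2 * (ρ * N) := by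
      have q1 : C3 * bb ≤ C3 * (CB * b) := by gcongr
      have q2 : (δ1 * s) ^ 2 * N ≤ δ1 ^ 2 * (ρ * N) := by
        rw [mul_pow, mul_assoc]; gcongr
      linarith
    have p5 : s * X ≤ C3 * CB / (2 * δ1) * b + δ1 / 2 * (ρ * N) := by
      have : C3 * CB / (2 * δ1) * b + δ1 / 2 * (ρ * N)
        = (C3 * (CB * b) + δ1 ^ 2 * (ρ * N)) / (2 * δ1) := by field_simp
      rw [this, le_div_iff₀ (by positivity)]
      linarith
    have p6 : ρ * (δ1 * N) ≤ ρ * ka + M1 * b := by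
      have q1 := mul_le_mul_of_nonneg_left k1 hρ0
      have q2 : ρ ≤ 1 := by
        rw [hρ, div_le_one (by positivity)]; linarith
      have q3 : ρ * (M1 * b) ≤ 1 * (M1 * b) := by gcongr
      linarith
    have p7 : δ1 / 2 * (ρ * N) - Q * b ≤ ρ * ka - s * X := by
      rw [hQ]; linarith
    have p8 := mul_le_mul_of_nonneg_left p7 hκ.le
    have p9 : κ * Q * b ≤ 1 * b := by gcongr
    have p10 : κ * s * -(r * ka + -X) = - (κ * (ρ * ka - s * X)) := by
      rw [← hrs]; ring
    rw [p10]
    linarith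
  have hfin := gronwall (fun t => reIP (H *ᵥ u t) (u t)) (fun t => 2 * reIP (H *ᵥ u' t) (u t))
    (κ * δ1 / c2 * ρ) (fun t ht => hasDeriv_reIP H hHherm u (u' t) _ t (hu t ht)) hdiss t ht
  have hN : reIP (u t) (u t) ≤ c2 / (δ0 / 2) *
      (Real.exp (-(κ * δ1 / (2 * c2) * ρ * t)) ^ 2 * reIP (u 0) (u 0)) := by
    have h1 := hlow (u t)
    have h2 := hup (u 0)
    have h3 : Real.exp (-(κ * δ1 / (2 * c2) * ρ * t)) ^ 2 = Real.exp (-(κ * δ1 / c2 * ρ * t)) := by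
      rw [← Real.exp_nat_mul]
      congr 1
      push_cast
      field_simp
    rw [h3, div_mul_eq_mul_div, le_div_iff₀ (by positivity)]
    have h4 := mul_le_mul_of_nonneg_left h2 (Real.exp_pos (-(κ * δ1 / c2 * ρ * t))).le
    linarith
  simp only [cnrm, ← reIP_self]
  calc Real.sqrt (reIP (u t) (u t)) ≤ Real.sqrt (c2 / (δ0 / 2) *
      (Real.exp (-(κ * δ1 / (2 * c2) * ρ * t)) ^ 2 * reIP (u 0) (u 0))) := Real.sqrt_le_sqrt hN
    _ = _ := by
      rw [Real.sqrt_mul (by positivity), Real.sqrt_mul (by positivity),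
        Real.sqrt_sq (Real.exp_pos _).le]
      ring
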